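/- (First Fundamental Theorem for SL(2,ℂ).) Let V = ℂ² with the standard action of G = SL(2,ℂ) and the dual action on V* given by ⟨g·v*, v⟩ = ⟨v*, g⁻¹v⟩. Every multilinear functional f : (V*)^m × V^n → ℂ that is invariant under the diagonal G-action is a linear combination of products of the elementary invariants ⟨v_i*, w_j⟩ (dual pairing), [v_i*, v_j*] (determinant bracket on V*), and [w_i, w_j] (determinant bracket on V), where in each such product every one of the m + n argument slots occurs exactly once. -/

import Mathlib

/-!
An isomorphism `V* ≅ V` of `SL₂`-modules turns every argument into a vector of the plane. For the
induction it is convenient to treat, more generally, forms that are semi-invariant of weight `a`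
under the upper triangular subgroup, that is, `f (g x) = (g 1 1) ^ a * f x`, and to show that they
are spanned by products of brackets and of exactly `a` second coordinates, one factor for each
block of a partial matching of the slots with `a` unmatched slots; the case `a = 0` is the theorem.

There are no nonzero forms of negative weight: evaluating `f` at the vectors `(p, q + s * p)`, it is
`s ^ a` times the value of `f` at the vectors `(-q, p + s⁻¹ * q)`, hence both a polynomial in `s`
and, for `a < 0`, a polynomial in `s⁻¹` without constant term. For `a ≥ 0`, putting `e₀` into
the first slot gives a form of weight `a + 1` in the other slots. By induction it is a combination
of matchings with a positive number of unmatched slots, and pairing one of those with the first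
slot lifts each of them to weight `a`, since `[e₀, v]` is the second coordinate of `v`. After
subtracting this lift, `f` vanishes when its first argument is `e₀`, so it is the second coordinate
of that argument times a form of weight `a - 1`, and induction applies again.
-/

open Finset Equiv Polynomial
open scoped Matrix MatrixGroups

theorem eq_zero_of_pow_mul_eval_eq_eval_inv {K : Type*} [Field K] [Infinite K] {p q : K[X]}
    {k : ℕ} (hk : 0 < k) (h : ∀ s ≠ 0, s ^ k * p.eval s = q.eval s⁻¹) : p = 0 := by
  have hpoly : X ^ (k + q.natDegree) * p = q.reverse := by
    refine eq_of_infinite_eval_eq _ _ ((Set.finite_singleton 0).infinite_compl.mono fun s hs ↦ ?_)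
    have hs : s ≠ 0 := hs
    let _ : Invertible s⁻¹ := invertibleOfNonzero (inv_ne_zero hs)
    have hrev : q.reverse.eval s * s⁻¹ ^ q.natDegree = q.eval s⁻¹ := by
      simpa using eval₂_reverse_mul_pow (RingHom.id K) s⁻¹ q
    simp only [Set.mem_ofPred_eq, eval_mul, eval_pow, eval_X]
    rw [pow_add, mul_right_comm, h s hs, ← hrev, inv_pow, inv_mul_cancel_right₀ (pow_ne_zero _ hs)]
  by_contra hp
  have hdeg := q.reverse_natDegree_le
  rw [← hpoly, natDegree_X_pow_mul _ hp] at hdeg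
  omega

theorem exists_polynomial_eval_eq_map_add_smul {R ι : Type*} {M : ι → Type*} [CommRing R]
    [Finite ι] [∀ i, AddCommGroup (M i)] [∀ i, Module R (M i)]
    (f : MultilinearMap R M R) (x y : ∀ i, M i) : ∃ p : R[X], ∀ s, p.eval s = f (x + s • y) := by
  classical
  have := Fintype.ofFinite ι
  refine ⟨∑ S : Finset ι, C (f (S.piecewise y x)) * X ^ #S, fun s ↦ ?_⟩
  rw [add_comm x, f.map_add_univ, eval_finsetSum]
  refine sum_congr rfl fun S _ ↦ ?_
  have hS : S.piecewise (s • y) x =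
      S.piecewise (fun i ↦ s • S.piecewise y x i) (S.piecewise y x) := by
    ext1 i
    by_cases hi : i ∈ S <;> simp [hi]
  rw [hS, f.map_piecewise_smul, prod_const, smul_eq_mul, eval_C_mul, eval_pow, eval_X, mul_comm]

theorem decomposeFin_symm_succ_apply_succ {n : ℕ} {σ : Perm (Fin n)} {i : Fin n}
    (hi : σ i = i) (k : Fin n) :
    Perm.decomposeFin.symm (i.succ, σ) k.succ = if k = i then 0 else (σ k).succ := by
  rw [Perm.decomposeFin_symm_apply_succ]
  split_ifs with h
  · rw [h, hi, swap_apply_right]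
  · refine swap_apply_of_ne_of_ne (Fin.succ_ne_zero _) fun hk ↦ ?_
    exact h (σ.injective (hi.symm ▸ Fin.succ_injective _ hk))

section SL2

variable {R : Type*} [CommRing R]

theorem SL2_smul (g : SL(2, R)) (v : Fin 2 → R) :
    g • v = ![g 0 0 * v 0 + g 0 1 * v 1, g 1 0 * v 0 + g 1 1 * v 1] := by
  change g.1 *ᵥ v = _
  ext i
  fin_cases i <;> simp [Matrix.mulVec, dotProduct]

theorem SL2_diag_mul_eq_one {g : SL(2, R)} (hg : g 1 0 = 0) : g 0 0 * g 1 1 = 1 := by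
  simpa [hg] using (Matrix.det_fin_two g.1).symm.trans g.2

/-- The determinant bracket `[v, w]`. -/
def detBracket : (Fin 2 → R) →ₗ[R] (Fin 2 → R) →ₗ[R] R :=
  LinearMap.mk₂ R (fun v w ↦ v 0 * w 1 - v 1 * w 0)
    (fun _ _ _ ↦ by simp only [Pi.add_apply]; ring)
    (fun _ _ _ ↦ by simp only [Pi.smul_apply, smul_eq_mul]; ring)
    (fun _ _ _ ↦ by simp only [Pi.add_apply]; ring)
    (fun _ _ _ ↦ by simp only [Pi.smul_apply, smul_eq_mul]; ring)

theorem detBracket_apply (v w : Fin 2 → R) : detBracket v w = v 0 * w 1 - v 1 * w 0 := rfl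

theorem detBracket_smul_smul (g : SL(2, R)) (v w : Fin 2 → R) :
    detBracket (g • v) (g • w) = detBracket v w := by
  have hdet : g 0 0 * g 1 1 - g 0 1 * g 1 0 = 1 := (Matrix.det_fin_two g.1).symm.trans g.2
  simp only [detBracket_apply, SL2_smul, Matrix.cons_val_zero, Matrix.cons_val_one]
  linear_combination (v 0 * w 1 - v 1 * w 0) * hdet

/-- The `SL₂`-equivariant isomorphism of the plane with its dual sending `w` to `[w, ·]`, in
coordinates for the dual basis. -/
def dualEquiv : (Fin 2 → R) ≃ₗ[R] (Fin 2 → R) where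
  toFun u := ![-u 1, u 0]
  invFun v := ![v 1, -v 0]
  map_add' u v := by ext i; fin_cases i <;> simp [add_comm]
  map_smul' c u := by ext i; fin_cases i <;> simp
  left_inv u := by ext i; fin_cases i <;> simp
  right_inv v := by ext i; fin_cases i <;> simp

theorem dualEquiv_smul (g : SL(2, R)) (v : Fin 2 → R) :
    dualEquiv (g • v) = (g⁻¹ : SL(2, R)).1ᵀ *ᵥ dualEquiv v := by
  rw [SL2_smul, Matrix.SpecialLinearGroup.coe_inv, Matrix.adjugate_fin_two]
  ext i
  fin_cases i <;> simp [dualEquiv, Matrix.mulVec, dotProduct, mul_comm, add_comm]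

/-- Identifying `V*` with `V` turns `⟨u, v⟩` into `[u, v]`, but into `-[v, u]` if the dual vector
comes second. -/
theorem detBracket_dual (p q : Prop) [Decidable p] [Decidable q] (u v : Fin 2 → R) :
    detBracket (if p then dualEquiv.symm u else u) (if q then dualEquiv.symm v else v) =
      (if ¬p ∧ q then -1 else 1) *
        if p ↔ q then u 0 * v 1 - u 1 * v 0 else u 0 * v 0 + u 1 * v 1 := by
  by_cases p <;> by_cases q <;> simp [*, detBracket_apply, dualEquiv] <;> ring

end SL2

section PlaneForm

/-- Multilinear forms in `n` vectors of the plane. -/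
abbrev PlaneForm (R : Type*) [CommRing R] (n : ℕ) : Type _ :=
  MultilinearMap R (fun _ : Fin n ↦ Fin 2 → R) R

variable {R : Type*} [CommRing R] {n : ℕ}

/-- Multiplication of a form by the second coordinate of one additional vector, inserted as
argument `0`. -/
def sndCoordMul : PlaneForm R n →ₗ[R] PlaneForm R (n + 1) :=
  (multilinearCurryLeftEquiv R (fun _ : Fin (n + 1) ↦ Fin 2 → R) R).symm ∘ₗ
    LinearMap.smulRightₗ (LinearMap.proj (φ := fun _ : Fin 2 ↦ R) 1)

theorem sndCoordMul_apply (f : PlaneForm R n) (x : Fin (n + 1) → Fin 2 → R) :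
    sndCoordMul f x = x 0 1 * f (Fin.tail x) := rfl

theorem sndCoordMul_curryLeft {f : PlaneForm R (n + 1)} (hf : f.curryLeft ![1, 0] = 0) :
    sndCoordMul (f.curryLeft ![0, 1]) = f := by
  refine MultilinearMap.ext fun x ↦ ?_
  have hv : x 0 = x 0 0 • ![1, 0] + x 0 1 • ![0, 1] := by ext i; fin_cases i <;> simp
  have hx : f x = f.curryLeft (x 0) (Fin.tail x) := by
    rw [f.curryLeft_apply, Fin.cons_self_tail]
  rw [sndCoordMul_apply, hx, hv, LinearMap.map_add, LinearMap.map_smul, LinearMap.map_smul, hf,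
    smul_zero, zero_add, smul_apply, smul_eq_mul, ← hv]

section Matching

variable {a : ℤ}

/-- A partial matching of `n` slots with `a` unmatched slots, encoded as the involution whose fixed
points are the unmatched slots. The number `a` is an integer because it serves as a weight, which
can drop below `0` in the induction. -/
structure PartialMatching (n : ℕ) (a : ℤ) where
  perm : Perm (Fin n)
  involutive : Function.Involutive perm
  card_fixedPoints : (#{i | perm i = i} : ℤ) = a

/-- The contribution of slot `i` to the product of brackets and second coordinates given by `σ`.
The bracket of a matched pair is charged to its smaller slot, and the larger one contributes `1`. -/
def matchingFactor (σ : Perm (Fin n)) (x : Fin n → Fin 2 → R) (i : Fin n) : R :=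
  if i < σ i then detBracket (x i) (x (σ i)) else if σ i = i then x i 1 else 1

theorem matchingFactor_update_of_ne {σ : Perm (Fin n)} (hσ : Function.Involutive σ)
    (x : Fin n → Fin 2 → R) {i j : Fin n} (hij : i ≠ min j (σ j)) (v : Fin 2 → R) :
    matchingFactor σ (Function.update x j v) i = matchingFactor σ x i := by
  have hlt (h : i < σ i) : i ≠ j ∧ σ i ≠ j := by
    have := hσ i
    grind
  have hfix (h : σ i = i) : i ≠ j := by grind
  unfold matchingFactor
  split_ifs with h₁ h₂
  · rw [Function.update_of_ne (hlt h₁).1, Function.update_of_ne (hlt h₁).2]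
  · rw [Function.update_of_ne (hfix h₂)]
  · rfl

theorem exists_linearMap_matchingFactor_update {σ : Perm (Fin n)} (hσ : Function.Involutive σ)
    (x : Fin n → Fin 2 → R) (j : Fin n) :
    ∃ ℓ : (Fin 2 → R) →ₗ[R] R,
      ∀ v, matchingFactor σ (Function.update x j v) (min j (σ j)) = ℓ v := by
  rcases lt_trichotomy j (σ j) with h | h | h
  · exact ⟨detBracket.flip (x (σ j)), fun v ↦ by simp [matchingFactor, h, h.le, h.ne']⟩
  · exact ⟨LinearMap.proj 1, fun v ↦ by simp [matchingFactor, ← h]⟩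
  · exact ⟨detBracket (x (σ j)), fun v ↦ by simp [matchingFactor, h, h.le, h.ne, hσ j]⟩

theorem exists_linearMap_prod_matchingFactor_update {σ : Perm (Fin n)}
    (hσ : Function.Involutive σ) (x : Fin n → Fin 2 → R) (j : Fin n) :
    ∃ ℓ : (Fin 2 → R) →ₗ[R] R, ∀ v, ∏ i, matchingFactor σ (Function.update x j v) i = ℓ v := by
  obtain ⟨ℓ, hℓ⟩ := exists_linearMap_matchingFactor_update hσ x j
  refine ⟨(∏ i ∈ univ.erase (min j (σ j)), matchingFactor σ x i) • ℓ, fun v ↦ ?_⟩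
  rw [← prod_erase_mul univ _ (mem_univ (min j (σ j))), hℓ, LinearMap.smul_apply, smul_eq_mul]
  congr 1
  exact prod_congr rfl fun i hi ↦ matchingFactor_update_of_ne hσ x (ne_of_mem_erase hi) v

namespace PartialMatching

variable (R) in
/-- The semi-invariant of weight `a` given by a partial matching: the product of the brackets of the
matched pairs and the second coordinates at the unmatched slots. -/
def form (σ : PartialMatching n a) : PlaneForm R n :=
  MultilinearMap.mk' (fun x ↦ ∏ i, matchingFactor σ.perm x i)
    (fun x j v w ↦ by
      obtain ⟨ℓ, hℓ⟩ := exists_linearMap_prod_matchingFactor_update σ.involutive x j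
      simp only [hℓ, map_add])
    (fun x j c v ↦ by
      obtain ⟨ℓ, hℓ⟩ := exists_linearMap_prod_matchingFactor_update σ.involutive x j
      simp only [hℓ, map_smul])

theorem form_apply (σ : PartialMatching n a) (x : Fin n → Fin 2 → R) :
    σ.form R x = ∏ i, matchingFactor σ.perm x i := rfl

/-- Insert a new unmatched slot `0`. -/
def addFixedPoint (σ : PartialMatching n (a - 1)) : PartialMatching (n + 1) a where
  perm := Perm.decomposeFin.symm (0, σ.perm)
  involutive i := by cases i using Fin.cases <;> simp [σ.involutive _]
  card_fixedPoints := by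
    simp [Fin.card_filter_univ_succ, σ.card_fixedPoints]

/-- Insert a new slot `0` and match it with the unmatched slot `i`. -/
def pairFixedPoint (σ : PartialMatching n (a + 1)) {i : Fin n} (hi : σ.perm i = i) :
    PartialMatching (n + 1) a where
  perm := Perm.decomposeFin.symm (i.succ, σ.perm)
  involutive k := by
    cases k using Fin.cases with
    | zero => simp [hi]
    | succ k =>
      rw [decomposeFin_symm_succ_apply_succ hi]
      split_ifs with h
      · simp [h]
      · rw [decomposeFin_symm_succ_apply_succ hi, if_neg, σ.involutive k]
        rwa [σ.involutive.eq_iff, hi]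
  card_fixedPoints := by
    have hfix : ({k | Perm.decomposeFin.symm (i.succ, σ.perm) k.succ = k.succ} : Finset (Fin n)) =
        ({k | σ.perm k = k} : Finset (Fin n)).erase i := by
      ext k
      by_cases h : k = i <;>
        simp [decomposeFin_symm_succ_apply_succ hi, h, (Fin.succ_ne_zero _).symm]
    have hmem : i ∈ ({k | σ.perm k = k} : Finset (Fin n)) := by simpa using hi
    have hcard := card_erase_add_one hmem
    have := σ.card_fixedPoints
    rw [Fin.card_filter_univ_succ, if_neg (by simp), hfix]
    omega

theorem form_addFixedPoint (σ : PartialMatching n (a - 1)) :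
    σ.addFixedPoint.form R = sndCoordMul (σ.form R) := by
  refine MultilinearMap.ext fun x ↦ ?_
  simp [form_apply, sndCoordMul_apply, Fin.prod_univ_succ, addFixedPoint, matchingFactor, Fin.tail]

theorem curryLeft_form_pairFixedPoint (σ : PartialMatching n (a + 1)) {i : Fin n}
    (hi : σ.perm i = i) :
    ((σ.pairFixedPoint hi).form R).curryLeft ![1, 0] = σ.form R := by
  refine MultilinearMap.ext fun x ↦ ?_
  have hfactor (k : Fin n) :
      matchingFactor (σ.pairFixedPoint hi).perm (Fin.cons ![1, 0] x) k.succ =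
        if k = i then 1 else matchingFactor σ.perm x k := by
    simp only [matchingFactor, pairFixedPoint, decomposeFin_symm_succ_apply_succ hi]
    split_ifs <;> simp_all [(Fin.succ_ne_zero _).symm]
  have hzero : matchingFactor (σ.pairFixedPoint hi).perm (Fin.cons ![1, 0] x) 0 =
      matchingFactor σ.perm x i := by
    simp [matchingFactor, pairFixedPoint, hi, detBracket_apply]
  rw [MultilinearMap.curryLeft_apply, form_apply, form_apply, Fin.prod_univ_succ, hzero,
    ← mul_prod_erase univ _ (mem_univ i), ← mul_prod_erase univ _ (mem_univ i), hfactor,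
    if_pos rfl, one_mul]
  congr 1
  exact prod_congr rfl fun k hk ↦ (hfactor k).trans (if_neg (ne_of_mem_erase hk))

end PartialMatching

variable (R n a) in
/-- The forms that are linear combinations of those given by partial matchings with `a` unmatched
slots. -/
def matchingSpan : Submodule R (PlaneForm R n) :=
  Submodule.span R (Set.range fun σ : PartialMatching n a ↦ σ.form R)

theorem sndCoordMul_mem_matchingSpan {f : PlaneForm R n} (hf : f ∈ matchingSpan R n (a - 1)) :
    sndCoordMul f ∈ matchingSpan R (n + 1) a := by
  suffices matchingSpan R n (a - 1) ≤ (matchingSpan R (n + 1) a).comap sndCoordMul from this hf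
  refine Submodule.span_le.2 (Set.range_subset_iff.2 fun σ ↦ ?_)
  exact Submodule.subset_span ⟨σ.addFixedPoint, σ.form_addFixedPoint⟩

theorem exists_mem_matchingSpan_curryLeft_eq (ha : 0 ≤ a) {f : PlaneForm R n}
    (hf : f ∈ matchingSpan R n (a + 1)) :
    ∃ F ∈ matchingSpan R (n + 1) a, F.curryLeft ![1, 0] = f := by
  induction hf using Submodule.span_induction with
  | mem _ h =>
    obtain ⟨σ, rfl⟩ := h
    have hcard := σ.card_fixedPoints
    obtain ⟨i, hi⟩ : ({i | σ.perm i = i} : Finset (Fin n)).Nonempty := by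
      rw [← card_pos]
      omega
    exact ⟨_, Submodule.subset_span ⟨σ.pairFixedPoint (by simpa using hi), rfl⟩,
      σ.curryLeft_form_pairFixedPoint _⟩
  | zero => exact ⟨0, zero_mem _, rfl⟩
  | add f g _ _ hf hg =>
    obtain ⟨F, hF, rfl⟩ := hf
    obtain ⟨G, hG, rfl⟩ := hg
    exact ⟨F + G, add_mem hF hG, rfl⟩
  | smul c f _ hf =>
    obtain ⟨F, hF, rfl⟩ := hf
    exact ⟨c • F, Submodule.smul_mem _ c hF, rfl⟩

theorem mem_matchingSpan_zero (f : PlaneForm R 0) : f ∈ matchingSpan R 0 0 := by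
  let σ : PartialMatching 0 0 := ⟨1, fun _ ↦ rfl, rfl⟩
  have hf : f = f 0 • σ.form R := by
    refine MultilinearMap.ext fun x ↦ ?_
    simp [PartialMatching.form_apply, Subsingleton.elim x 0]
  rw [hf]
  exact Submodule.smul_mem _ _ (Submodule.subset_span ⟨σ, rfl⟩)

theorem exists_eq_sum_of_mem_matchingSpan {f : PlaneForm R n} (hf : f ∈ matchingSpan R n 0) :
    ∃ c : Perm (Fin n) → R, ∀ x, f x = ∑ σ with σ * σ = 1 ∧ ∀ i, σ i ≠ i,
      c σ * ∏ i with i < σ i, detBracket (x i) (x (σ i)) := by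
  induction hf using Submodule.span_induction with
  | mem _ h =>
    obtain ⟨σ, rfl⟩ := h
    have hfix : ∀ i, σ.perm i ≠ i := by
      simpa [filter_eq_empty_iff] using σ.card_fixedPoints
    have hmem : σ.perm * σ.perm = 1 ∧ ∀ i, σ.perm i ≠ i :=
      ⟨Perm.ext σ.involutive, hfix⟩
    refine ⟨Pi.single σ.perm 1, fun x ↦ ?_⟩
    rw [sum_eq_single_of_mem σ.perm (by simpa using hmem)
      fun τ _ hτ ↦ by rw [Pi.single_eq_of_ne hτ, zero_mul]]
    simp [PartialMatching.form_apply, matchingFactor, hfix, prod_filter]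
  | zero => exact ⟨0, fun x ↦ by simp⟩
  | add f g _ _ hf hg =>
    obtain ⟨c, hc⟩ := hf
    obtain ⟨d, hd⟩ := hg
    exact ⟨c + d, fun x ↦ by simp [hc, hd, add_mul, sum_add_distrib]⟩
  | smul b f _ hf =>
    obtain ⟨c, hc⟩ := hf
    exact ⟨b • c, fun x ↦ by simp [hc, mul_assoc, mul_sum]⟩

end Matching

end PlaneForm

section Borel

variable {K : Type*} [Field K] {n : ℕ} {a : ℤ}

variable (K n a) in
/-- The semi-invariants of weight `a` of the Borel subgroup of upper triangular matrices in `SL₂`,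
with respect to the character `g ↦ g 1 1`. -/
def borelSemiinvariants : Submodule K (PlaneForm K n) where
  carrier := {f | ∀ g : SL(2, K), g 1 0 = 0 → ∀ x, f (g • x) = g 1 1 ^ a * f x}
  add_mem' hf hf' g hg x := by
    simp only [add_apply, hf g hg x, hf' g hg x, mul_add]
  zero_mem' _ _ _ := by simp only [zero_apply, mul_zero]
  smul_mem' c f hf g hg x := by
    simp only [smul_apply, hf g hg x, smul_eq_mul, mul_left_comm]

theorem exists_upperTriangular_smul_eq {s : K} (hs : s ≠ 0) :
    ∃ g : SL(2, K), g 1 0 = 0 ∧ g 1 1 = s ∧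
      ∀ v : Fin 2 → K, g • (![-v 1, v 0] + s⁻¹ • ![0, v 1]) = v + s • ![0, v 0] := by
  let g : SL(2, K) := ⟨!![s⁻¹, 1; 0, s], by simp [hs]⟩
  refine ⟨g, rfl, rfl, fun v ↦ (SL2_smul g _).trans ?_⟩
  ext i
  fin_cases i <;> simp [g, mul_add, hs, add_comm]

theorem borelSemiinvariants_eq_bot_of_neg [Infinite K] (ha : a < 0) :
    borelSemiinvariants K n a = ⊥ := by
  refine (Submodule.eq_bot_iff _).2 fun f hf ↦ MultilinearMap.ext fun x ↦ ?_
  obtain ⟨k, rfl⟩ : ∃ k : ℕ, a = -k := ⟨a.natAbs, by omega⟩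
  obtain ⟨p, hp⟩ := exists_polynomial_eval_eq_map_add_smul f x fun i ↦ ![0, x i 0]
  obtain ⟨q, hq⟩ := exists_polynomial_eval_eq_map_add_smul f
    (fun i ↦ ![-x i 1, x i 0]) fun i ↦ ![0, x i 1]
  have hpq : p = 0 := by
    refine eq_zero_of_pow_mul_eval_eq_eval_inv (q := q) (k := k) (by omega) fun s hs ↦ ?_
    obtain ⟨g, hg, hgs, hgx⟩ := exists_upperTriangular_smul_eq hs
    rw [hp, hq, show x + s • (fun i ↦ ![0, x i 0]) = g • _ from funext fun i ↦ (hgx (x i)).symm,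
      hf g hg, hgs, zpow_neg, zpow_natCast, mul_inv_cancel_left₀ (pow_ne_zero k hs)]
    rfl
  simpa [hpq] using (hp 0).symm

theorem borelSemiinvariants_zero_eq_bot [Infinite K] (ha : a ≠ 0) :
    borelSemiinvariants K 0 a = ⊥ := by
  rcases ha.lt_or_gt with ha | ha
  · exact borelSemiinvariants_eq_bot_of_neg ha
  refine (Submodule.eq_bot_iff _).2 fun f hf ↦ MultilinearMap.ext fun x ↦ ?_
  lift a to ℕ using ha.le
  have hC : C (f x) = 0 := by
    refine eq_zero_of_pow_mul_eval_eq_eval_inv (q := C (f x)) (k := a) (by omega) fun s hs ↦ ?_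
    obtain ⟨g, hg, hgs, -⟩ := exists_upperTriangular_smul_eq hs
    rw [eval_C, eval_C, ← hgs, ← zpow_natCast, ← hf g hg x, Subsingleton.elim (g • x) x]
  exact C_eq_zero.1 hC

theorem curryLeft_mem_borelSemiinvariants {f : PlaneForm K (n + 1)}
    (hf : f ∈ borelSemiinvariants K (n + 1) a) :
    f.curryLeft ![1, 0] ∈ borelSemiinvariants K n (a + 1) := by
  intro g hg x
  have hdiag := SL2_diag_mul_eq_one hg
  have hg' : g 1 1 ≠ 0 := right_ne_zero_of_mul_eq_one hdiag
  have hx : (Fin.cons ![1, 0] (g • x) : Fin (n + 1) → Fin 2 → K) =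
      g • Fin.cons (g 1 1 • ![1, 0]) x := by
    ext1 i
    cases i using Fin.cases
    · simp [SL2_smul, hg, hdiag]
    · rfl
  rw [f.curryLeft_apply, hx, hf g hg, f.cons_smul, smul_eq_mul, ← mul_assoc, zpow_add_one₀ hg',
    f.curryLeft_apply]

theorem curryLeft_mem_borelSemiinvariants_of_eq_zero {f : PlaneForm K (n + 1)}
    (hf : f ∈ borelSemiinvariants K (n + 1) a) (hf₀ : f.curryLeft ![1, 0] = 0) :
    f.curryLeft ![0, 1] ∈ borelSemiinvariants K n (a - 1) := by
  intro g hg x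
  have hg' : g 1 1 ≠ 0 := right_ne_zero_of_mul_eq_one (SL2_diag_mul_eq_one hg)
  have hv : g • ![(0 : K), 1] = g 0 1 • ![1, 0] + g 1 1 • ![0, 1] := by simp [SL2_smul]
  have hx : f.curryLeft (g • ![0, 1]) (g • x) = g 1 1 ^ a * f.curryLeft ![0, 1] x := by
    rw [f.curryLeft_apply, f.curryLeft_apply, ← hf g hg]
    congr 1
    ext1 i
    cases i using Fin.cases <;> rfl
  rw [hv, LinearMap.map_add, LinearMap.map_smul, LinearMap.map_smul, hf₀, smul_zero, zero_add,
    smul_apply, smul_eq_mul] at hx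
  rw [zpow_sub_one₀ hg', mul_right_comm, ← hx]
  field_simp

theorem PartialMatching.form_mem_borelSemiinvariants (σ : PartialMatching n a) :
    σ.form K ∈ borelSemiinvariants K n a := by
  intro g hg x
  have hfactor (i) : matchingFactor σ.perm (g • x) i =
      (if σ.perm i = i then g 1 1 else 1) * matchingFactor σ.perm x i := by
    simp only [matchingFactor, Pi.smul_apply, detBracket_smul_smul]
    split_ifs with hlt heq
    · exact absurd heq hlt.ne'
    · rw [one_mul]
    · simp [SL2_smul, hg]
    · rw [one_mul]
  have hweight : g 1 1 ^ #{i | σ.perm i = i} = g 1 1 ^ a := by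
    rw [← zpow_natCast, σ.card_fixedPoints]
  simp only [form_apply, hfactor, prod_mul_distrib, ← prod_filter, prod_const, hweight]

theorem matchingSpan_le_borelSemiinvariants :
    matchingSpan K n a ≤ borelSemiinvariants K n a :=
  Submodule.span_le.2 <| Set.range_subset_iff.2 PartialMatching.form_mem_borelSemiinvariants

theorem borelSemiinvariants_eq_matchingSpan [Infinite K] :
    borelSemiinvariants K n a = matchingSpan K n a := by
  refine le_antisymm ?_ matchingSpan_le_borelSemiinvariants
  induction n generalizing a with
  | zero =>
    rcases eq_or_ne a 0 with rfl | ha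
    · exact fun f _ ↦ mem_matchingSpan_zero f
    · exact (borelSemiinvariants_zero_eq_bot ha).trans_le bot_le
  | succ n ih =>
    rcases lt_or_ge a 0 with ha | ha
    · exact (borelSemiinvariants_eq_bot_of_neg ha).trans_le bot_le
    intro f hf
    obtain ⟨F, hF, hFf⟩ :=
      exists_mem_matchingSpan_curryLeft_eq ha (ih (curryLeft_mem_borelSemiinvariants hf))
    have hr : f - F ∈ borelSemiinvariants K (n + 1) a :=
      sub_mem hf (matchingSpan_le_borelSemiinvariants hF)
    have hr₀ : (f - F).curryLeft ![1, 0] = 0 := by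
      rw [← sub_eq_zero.2 hFf.symm]
      rfl
    have hq := ih (curryLeft_mem_borelSemiinvariants_of_eq_zero hr hr₀)
    rw [← sub_add_cancel f F, ← sndCoordMul_curryLeft hr₀]
    exact add_mem (sndCoordMul_mem_matchingSpan hq) hF

end Borel

theorem first_fundamental_theorem_SL2_general {K : Type*} [Field K] [Infinite K] {N : ℕ}
    (D : Fin N → Prop) [DecidablePred D] (f : MultilinearMap K (fun _ : Fin N ↦ Fin 2 → K) K)
    (hinv : ∀ g : SL(2, K), g 1 0 = 0 → ∀ x : Fin N → Fin 2 → K,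
      f (fun i ↦ if D i then (g⁻¹ : SL(2, K)).1ᵀ *ᵥ x i else g.1 *ᵥ x i) = f x) :
    ∃ c : Perm (Fin N) → K, ∀ x : Fin N → Fin 2 → K,
      f x = ∑ σ with σ * σ = 1 ∧ ∀ i, σ i ≠ i,
        c σ * ∏ i with i < σ i,
          if D i ↔ D (σ i) then x i 0 * x (σ i) 1 - x i 1 * x (σ i) 0
          else x i 0 * x (σ i) 0 + x i 1 * x (σ i) 1 := by
  let J (i : Fin N) : (Fin 2 → K) ≃ₗ[K] (Fin 2 → K) := if D i then dualEquiv else .refl K _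
  have hF : f.compLinearMap (fun i ↦ (J i : (Fin 2 → K) →ₗ[K] _)) ∈
      borelSemiinvariants K N 0 := by
    intro g hg x
    rw [zpow_zero, one_mul, f.compLinearMap_apply, f.compLinearMap_apply]
    refine (congrArg f (funext fun i ↦ ?_)).trans (hinv g hg _)
    by_cases hi : D i
    · simp only [J, hi, if_true, LinearEquiv.coe_coe, Pi.smul_apply, dualEquiv_smul]
    · simp only [J, hi, if_false]
      rfl
  rw [borelSemiinvariants_eq_matchingSpan] at hF
  obtain ⟨c, hc⟩ := exists_eq_sum_of_mem_matchingSpan hF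
  refine ⟨fun σ ↦ c σ * ∏ i with i < σ i, if ¬D i ∧ D (σ i) then -1 else 1, fun x ↦ ?_⟩
  have hx : f x = f.compLinearMap (fun i ↦ (J i : (Fin 2 → K) →ₗ[K] _))
      fun i ↦ if D i then dualEquiv.symm (x i) else x i := by
    rw [f.compLinearMap_apply]
    congr 1
    ext1 i
    by_cases hi : D i <;> simp [J, hi]
  simp only [hx, hc, detBracket_dual, prod_mul_distrib, mul_assoc]

/-- **First Fundamental Theorem for `SL(2,ℂ)`.**
Let `V = ℂ²` with the standard `SL(2,ℂ)`-action and the dual action on `V*`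
(both identified with `ℂ²`, the dual via the dual basis, so that `g` acts on `V`
by `w ↦ g·w` and on `V*` by `v* ↦ (g⁻¹)ᵀ·v*`).  Every multilinear functional
`f : (V*)^m × V^n → ℂ` (encoded as an `(m+n)`-linear form whose first `m` slots are
`V*`-slots and whose last `n` slots are `V`-slots) invariant under the diagonal action
is a linear combination, over perfect matchings `σ` of the `m+n` slots
(fixed-point-free involutions), of products of the elementary invariants:
the dual pairing `⟨v*, w⟩` on mixed pairs, and the determinant brackets
`[v_i*, v_j*]`, `[w_i, w_j]` on like pairs, each slot occurring exactly once. -/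
theorem first_fundamental_theorem_SL2 (m n : ℕ)
    (f : MultilinearMap ℂ (fun _ : Fin (m + n) => (Fin 2 → ℂ)) ℂ)
    (hinv : ∀ g : Matrix.SpecialLinearGroup (Fin 2) ℂ,
      ∀ x : Fin (m + n) → Fin 2 → ℂ,
        f (fun i => if (i : ℕ) < m
            then (((g⁻¹ : Matrix.SpecialLinearGroup (Fin 2) ℂ) :
                Matrix (Fin 2) (Fin 2) ℂ).transpose).mulVec (x i)
            else ((g : Matrix (Fin 2) (Fin 2) ℂ)).mulVec (x i)) = f x) :
    ∃ c : Equiv.Perm (Fin (m + n)) → ℂ,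
      ∀ x : Fin (m + n) → Fin 2 → ℂ,
        f x =
          ∑ σ ∈ Finset.univ.filter
              (fun σ : Equiv.Perm (Fin (m + n)) => σ * σ = 1 ∧ ∀ i, σ i ≠ i),
            c σ * ∏ i ∈ Finset.univ.filter (fun i : Fin (m + n) => i < σ i),
              (if ((i : ℕ) < m ↔ ((σ i : Fin (m + n)) : ℕ) < m)
                then x i 0 * x (σ i) 1 - x i 1 * x (σ i) 0
                else x i 0 * x (σ i) 0 + x i 1 * x (σ i) 1) :=
  first_fundamental_theorem_SL2_general (fun i : Fin (m + n) ↦ (i : ℕ) < m) f fun g _ ↦ hinv g
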